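/- Let (xᵢ)_{i∈ℕ} be a sequence in X, (Δᵢ) positive radii, and for each i let mᵢ : ℝⁿ → ℝᵏ be continuously differentiable with gradient errors ‖∇f_ℓ(xᵢ) − ∇(mᵢ)_ℓ(xᵢ)‖₂ ≤ κ̇·Δᵢ for all ℓ, where κ̇ > 0. Suppose Δᵢ ≤ μ·ω̃_{mᵢ}(xᵢ) for a constant μ > 0, where ω̃_{mᵢ}(xᵢ) := min{ω_{mᵢ}(xᵢ), 1}. Then ω̃(xᵢ) ≤ (√c·κ̇·μ + 1)·ω̃_{mᵢ}(xᵢ) for all i, where ω̃(x) := min{ω(x), 1}; consequently, if ω̃_{mᵢ}(xᵢ) → 0 as i → ∞, then ω̃(xᵢ) → 0 as well. (Lemma 6.12.) -/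

import Mathlib

noncomputable section

/-- The ℓ^∞ (maximum) norm on Euclidean space. -/
def supNorm {n : ℕ} (v : EuclideanSpace ℝ (Fin n)) : ℝ :=
  ‖(WithLp.equiv 2 (Fin n → ℝ)) v‖

/-- The multiobjective criticality measure
`ω_g(x) = − inf { max_ℓ ⟨∇g_ℓ(x), d⟩ : x + d ∈ X, ‖d‖_∞ ≤ 1 }`. -/
def omega {n k : ℕ} (X : Set (EuclideanSpace ℝ (Fin n)))
    (g : Fin k → EuclideanSpace ℝ (Fin n) → ℝ) (x : EuclideanSpace ℝ (Fin n)) : ℝ :=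
  - sInf ((fun d => ⨆ ℓ, fderiv ℝ (g ℓ) x d) ''
      {d : EuclideanSpace ℝ (Fin n) | x + d ∈ X ∧ supNorm d ≤ 1})

section CriticalityMeasure

variable {n k : ℕ} {X : Set (EuclideanSpace ℝ (Fin n))}
  {g h : Fin k → EuclideanSpace ℝ (Fin n) → ℝ} {x : EuclideanSpace ℝ (Fin n)} {C : ℝ}

lemma norm_fderiv_sub_fderiv_eq {E : Type*} [NormedAddCommGroup E] [InnerProductSpace ℝ E]
    [CompleteSpace E] (f g : E → ℝ) (x : E) :
    ‖fderiv ℝ f x - fderiv ℝ g x‖ = ‖gradient f x - gradient g x‖ := by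
  unfold gradient
  rw [← map_sub, LinearIsometryEquiv.norm_map]

lemma bddBelow_omega_image (hk : 1 ≤ k)
    (hC : ∀ d : EuclideanSpace ℝ (Fin n), supNorm d ≤ 1 → ‖d‖ ≤ C) :
    BddBelow ((fun d => ⨆ ℓ, fderiv ℝ (g ℓ) x d) ''
      {d : EuclideanSpace ℝ (Fin n) | x + d ∈ X ∧ supNorm d ≤ 1}) := by
  let ℓ₀ : Fin k := ⟨0, hk⟩
  refine ⟨-(‖fderiv ℝ (g ℓ₀) x‖ * C), ?_⟩
  rintro _ ⟨d, ⟨-, hd⟩, rfl⟩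
  have hle : |fderiv ℝ (g ℓ₀) x d| ≤ ‖fderiv ℝ (g ℓ₀) x‖ * C :=
    (fderiv ℝ (g ℓ₀) x).le_opNorm_of_le (hC d hd)
  exact (abs_le.mp hle).1.trans
    (le_ciSup (f := fun ℓ => fderiv ℝ (g ℓ) x d) (Set.finite_range _).bddAbove ℓ₀)

lemma supNorm_zero : supNorm (0 : EuclideanSpace ℝ (Fin n)) = 0 := by
  simp [supNorm]

lemma omega_nonneg (hk : 1 ≤ k) (hx : x ∈ X)
    (hC : ∀ d : EuclideanSpace ℝ (Fin n), supNorm d ≤ 1 → ‖d‖ ≤ C) :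
    0 ≤ omega X g x := by
  have hle := csInf_le (bddBelow_omega_image (X := X) (g := g) (x := x) hk hC)
    ⟨0, ⟨by simpa using hx, by simp [supNorm_zero]⟩, rfl⟩
  simp only [map_zero, Real.iSup_const_zero] at hle
  exact neg_nonneg.mpr hle

lemma omega_le_omega_add (hk : 1 ≤ k) (hx : x ∈ X)
    (hC : ∀ d : EuclideanSpace ℝ (Fin n), supNorm d ≤ 1 → ‖d‖ ≤ C) {ε : ℝ}
    (herr : ∀ ℓ, ‖gradient (g ℓ) x - gradient (h ℓ) x‖ ≤ ε) :
    omega X g x ≤ omega X h x + C * ε := by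
  have : Nonempty (Fin k) := ⟨⟨0, hk⟩⟩
  have hle : sInf ((fun d => ⨆ ℓ, fderiv ℝ (h ℓ) x d) ''
      {d : EuclideanSpace ℝ (Fin n) | x + d ∈ X ∧ supNorm d ≤ 1}) - C * ε ≤
      sInf ((fun d => ⨆ ℓ, fderiv ℝ (g ℓ) x d) ''
      {d : EuclideanSpace ℝ (Fin n) | x + d ∈ X ∧ supNorm d ≤ 1}) := by
    refine le_csInf ⟨_, 0, ⟨by simpa using hx, by simp [supNorm_zero]⟩, rfl⟩ ?_
    rintro _ ⟨d, hd, rfl⟩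
    rw [sub_le_iff_le_add]
    refine (csInf_le (bddBelow_omega_image hk hC) ⟨d, hd, rfl⟩).trans (ciSup_le fun ℓ => ?_)
    have hdiff : |(fderiv ℝ (g ℓ) x - fderiv ℝ (h ℓ) x) d| ≤ ε * C :=
      ContinuousLinearMap.le_of_opNorm_le_of_le _
        ((norm_fderiv_sub_fderiv_eq _ _ _).trans_le (herr ℓ)) (hC d hd.2)
    rw [sub_apply] at hdiff
    have hsup := le_ciSup (f := fun ℓ => fderiv ℝ (g ℓ) x d) (Set.finite_range _).bddAbove ℓ
    linarith [(abs_le.mp hdiff).1]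
  unfold omega
  linarith

end CriticalityMeasure

/-- Lemma 6.12: along iterates with fully linear gradients and radii controlled
by the truncated model criticality measure `ω̃_{mᵢ}(xᵢ) = min{ω_{mᵢ}(xᵢ), 1}`,
one has `ω̃(xᵢ) ≤ (√c·κ̇·μ + 1)·ω̃_{mᵢ}(xᵢ)`; consequently, if
`ω̃_{mᵢ}(xᵢ) → 0` then also `ω̃(xᵢ) → 0`. -/
theorem truncated_measure_transfer
    (n k : ℕ) (hk : 1 ≤ k)
    (X : Set (EuclideanSpace ℝ (Fin n)))
    (hXne : X.Nonempty) (hXconv : Convex ℝ X) (hXcomp : IsCompact X)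
    (f : Fin k → EuclideanSpace ℝ (Fin n) → ℝ)
    (U : Set (EuclideanSpace ℝ (Fin n))) (hUopen : IsOpen U) (hXU : X ⊆ U)
    (hf : ∀ ℓ, ContDiffOn ℝ 1 (f ℓ) U)
    (c : ℝ) (hc : 0 < c)
    (hcn : ∀ v : EuclideanSpace ℝ (Fin n), ‖v‖ ≤ Real.sqrt c * supNorm v)
    (x : ℕ → EuclideanSpace ℝ (Fin n)) (hx : ∀ i, x i ∈ X)
    (Δ : ℕ → ℝ) (hΔ : ∀ i, 0 < Δ i)
    (m : ℕ → Fin k → EuclideanSpace ℝ (Fin n) → ℝ)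
    (hm : ∀ i ℓ, ContDiff ℝ 1 (m i ℓ))
    (κdot : ℝ) (hκdot : 0 < κdot)
    (herr : ∀ i ℓ, ‖gradient (f ℓ) (x i) - gradient (m i ℓ) (x i)‖ ≤ κdot * Δ i)
    (μ : ℝ) (hμ : 0 < μ)
    (hΔμ : ∀ i, Δ i ≤ μ * min (omega X (m i) (x i)) 1) :
    (∀ i, min (omega X f (x i)) 1
      ≤ (Real.sqrt c * κdot * μ + 1) * min (omega X (m i) (x i)) 1)
    ∧ (Filter.Tendsto (fun i => min (omega X (m i) (x i)) 1) Filter.atTop (nhds 0) →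
        Filter.Tendsto (fun i => min (omega X f (x i)) 1) Filter.atTop (nhds 0)) := by
  have hC : ∀ d : EuclideanSpace ℝ (Fin n), supNorm d ≤ 1 → ‖d‖ ≤ Real.sqrt c := fun d hd =>
    (hcn d).trans (mul_le_of_le_one_right (Real.sqrt_nonneg c) hd)
  have hbound : ∀ i, min (omega X f (x i)) 1
      ≤ (Real.sqrt c * κdot * μ + 1) * min (omega X (m i) (x i)) 1 := by
    intro i
    have hε : Real.sqrt c * (κdot * Δ i)
        ≤ Real.sqrt c * (κdot * (μ * min (omega X (m i) (x i)) 1)) := by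
      gcongr
      exact hΔμ i
    have hε₀ : 0 ≤ Real.sqrt c * (κdot * Δ i) := by
      have := hΔ i
      positivity
    calc min (omega X f (x i)) 1
        ≤ min (omega X (m i) (x i) + Real.sqrt c * (κdot * Δ i))
            (1 + Real.sqrt c * (κdot * Δ i)) :=
          min_le_min (omega_le_omega_add hk (hx i) hC (herr i)) (by linarith)
      _ = min (omega X (m i) (x i)) 1 + Real.sqrt c * (κdot * Δ i) := min_add_add_right _ _ _
      _ ≤ (Real.sqrt c * κdot * μ + 1) * min (omega X (m i) (x i)) 1 := by linarith
  refine ⟨hbound, fun hlim => squeeze_zero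
    (fun i => le_min (omega_nonneg hk (hx i) hC) zero_le_one) hbound ?_⟩
  simpa using hlim.const_mul (Real.sqrt c * κdot * μ + 1)
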